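/- arXiv:2508.17459 — 3 statements merged into one kernel-verified Lean document; each statement's English description precedes it below -/
import Mathlib

section
/- For all integers k ≥ 2 and n ≥ k, the counts s_k satisfy the recurrence s_k(n) + s_{k-1}(n) = s_{k-1}(n-k+1) + q(n-k+1); equivalently, s_k(n) = − s_{k-1}(n) + s_{k-1}(n-k+1) + q(n-k+1). -/
/-!
In generating functions, `∑ₙ s k n xⁿ = ∑_{m ≥ 1} x^(k m) ∏_{i > m} (1 + xⁱ)`. Adding the series for
`k` and `k - 1` produces the factor `1 + x^m`, so the sum is
`∑_{m ≥ 1} x^((k-1) m) ∏_{i ≥ m} (1 + xⁱ)`. Replacing `m` by `m + 1` turns this into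
`x^(k-1) ∑_{m ≥ 0} x^((k-1) m) ∏_{i > m} (1 + xⁱ)`, whose `m = 0` term counts partitions into
distinct parts and whose remaining terms give the series for `k - 1`.

The proof is the bijective form of this computation. A partition counted by `s k n` is encoded as the
pair `(m, D)` of its smallest part and the set of its other parts (`nonempty_equiv_smallestPairs`),
and both sides of the recurrence count the pairs in `weakPairs (k - 1) n`
(`ncard_weakPairs_eq_add` and `ncard_weakPairs_shift`).
-/

/-- `q n` is the number of partitions of `n` into distinct parts. -/
noncomputable def q (n : ℕ) : ℕ := Nat.card {p : n.Partition // p.parts.Nodup}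

/-- A partition has its smallest part repeated exactly `k` times and all
other parts occurring exactly once. -/
def IsSmallestRep (k : ℕ) {n : ℕ} (p : n.Partition) : Prop :=
  ∃ m ∈ p.parts, (∀ a ∈ p.parts, m ≤ a) ∧ p.parts.count m = k ∧
    ∀ a ∈ p.parts, a ≠ m → p.parts.count a = 1

/-- `s k n` counts partitions of `n` whose smallest part occurs exactly `k`
times and whose other parts are distinct. -/
noncomputable def s (k n : ℕ) : ℕ := Nat.card {p : n.Partition // IsSmallestRep k p}

/-- A partition has its largest part repeated exactly `k` times and all
other parts occurring exactly once. -/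
def IsLargestRep (k : ℕ) {n : ℕ} (p : n.Partition) : Prop :=
  ∃ m ∈ p.parts, (∀ a ∈ p.parts, a ≤ m) ∧ p.parts.count m = k ∧
    ∀ a ∈ p.parts, a ≠ m → p.parts.count a = 1

/-- `l k n` counts partitions of `n` whose largest part occurs exactly `k`
times and whose other parts are distinct. -/
noncomputable def l (k n : ℕ) : ℕ := Nat.card {p : n.Partition // IsLargestRep k p}

/-- Pairs `(m, D)` encoding partitions of `n` with smallest part `m`, repeated `k` times, and with
set `D` of further parts. -/
def smallestPairs (k n : ℕ) : Set (ℕ × Finset ℕ) :=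
  {x | 1 ≤ x.1 ∧ (∀ a ∈ x.2, x.1 < a) ∧ k * x.1 + ∑ a ∈ x.2, a = n}

/-- As `smallestPairs`, except that `m` may also belong to `D`; the number of such pairs is the coefficient
of `xⁿ` in `∑_{m ≥ 1} x^(k m) ∏_{i ≥ m} (1 + xⁱ)`. -/
def weakPairs (k n : ℕ) : Set (ℕ × Finset ℕ) :=
  {x | 1 ≤ x.1 ∧ (∀ a ∈ x.2, x.1 ≤ a) ∧ k * x.1 + ∑ a ∈ x.2, a = n}

/-- Finite sets of positive integers with sum `n`, encoding partitions into distinct parts. -/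
def distinctSets (n : ℕ) : Set (Finset ℕ) :=
  {D | (∀ a ∈ D, 0 < a) ∧ ∑ a ∈ D, a = n}

theorem nonempty_equiv_smallestPairs (k n : ℕ) (hk : 1 ≤ k) :
    Nonempty (smallestPairs k n ≃ {p : n.Partition // IsSmallestRep k p}) := by
  have hcount : ∀ (m : ℕ) (D : Finset ℕ) (a : ℕ),
      (Multiset.replicate k m + D.val).count a
        = (if m = a then k else 0) + if a ∈ D then 1 else 0 := by
    intro m D a
    rw [Multiset.count_add, Multiset.count_replicate, Multiset.count_eq_of_nodup D.nodup]
    simp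
  have hmem : ∀ (m : ℕ) (D : Finset ℕ) (a : ℕ),
      a ∈ Multiset.replicate k m + D.val ↔ a = m ∨ a ∈ D := by
    intro m D a
    rw [Multiset.mem_add, Multiset.mem_replicate, Finset.mem_val]
    have : k ≠ 0 := by omega
    tauto
  refine ⟨Equiv.ofBijective (fun x => ⟨⟨Multiset.replicate k x.1.1 + x.1.2.val, ?_, ?_⟩, ?_⟩)
    ⟨?_, ?_⟩⟩
  · obtain ⟨⟨m, D⟩, h1, h2, h3⟩ := x
    intro i hi
    rcases (hmem _ _ _).1 hi with rfl | hi
    · exact h1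
    · exact lt_of_le_of_lt (Nat.zero_le _) (h2 _ hi)
  · obtain ⟨⟨m, D⟩, h1, h2, h3⟩ := x
    simpa [Finset.sum_val] using h3
  · obtain ⟨⟨m, D⟩, h1, h2, h3⟩ := x
    have hmD : m ∉ D := fun h => lt_irrefl _ (h2 m h)
    refine ⟨m, (hmem _ _ _).2 (Or.inl rfl), ?_, ?_, ?_⟩
    · intro a ha
      rcases (hmem _ _ _).1 ha with rfl | ha
      · exact le_rfl
      · exact (h2 _ ha).le
    · simp [hcount, hmD]
    · intro a ha hne
      rcases (hmem _ _ _).1 ha with rfl | ha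
      · exact absurd rfl hne
      · have : a ∈ D := ha
        simp [hcount, this, hne.symm]
  · rintro ⟨⟨m, D⟩, h1, h2, h3⟩ ⟨⟨m', D'⟩, h1', h2', h3'⟩ h
    have h : Multiset.replicate k m + D.val = Multiset.replicate k m' + D'.val :=
      congrArg (fun p => p.1.parts) h
    have e1 := (hmem m' D' m).1 (h ▸ (hmem m D m).2 (Or.inl rfl))
    have e2 := (hmem m D m').1 (h ▸ (hmem m' D' m').2 (Or.inl rfl))
    have hm : m = m' := by
      rcases e1 with e1 | e1
      · exact e1
      · rcases e2 with e2 | e2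
        · exact e2.symm
        · have a1 : m' < m := h2' _ e1
          have a2 : m < m' := h2 _ e2
          omega
    subst hm
    have hD : D = D' := Finset.val_inj.1 (add_left_cancel h)
    subst hD
    rfl
  · rintro ⟨p, m, hm, hmin, hc, hone⟩
    have hparts : Multiset.replicate k m + (p.parts.toFinset.erase m).val = p.parts := by
      ext a
      rw [hcount]
      by_cases ha : a = m
      · subst ha; simp [hc]
      · by_cases hap : a ∈ p.parts
        · simp [hone a hap ha, ha, Ne.symm ha, hap]
        · simp [ha, Ne.symm ha, hap]
    refine ⟨⟨(m, p.parts.toFinset.erase m), p.parts_pos hm, ?_, ?_⟩, ?_⟩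
    · intro a ha
      have ha' : a ≠ m ∧ a ∈ p.parts := by simpa using ha
      exact lt_of_le_of_ne (hmin a ha'.2) ha'.1.symm
    · have := congrArg Multiset.sum hparts
      rw [p.parts_sum, Multiset.sum_add, Finset.sum_val] at this
      simpa using this
    · exact Subtype.ext (Nat.Partition.ext hparts)

theorem nonempty_equiv_distinctSets (n : ℕ) :
    Nonempty (distinctSets n ≃ {p : n.Partition // p.parts.Nodup}) := by
  refine ⟨Equiv.ofBijective (fun D => ⟨⟨D.1.val, fun {i} hi => D.2.1 i hi, ?_⟩, D.1.nodup⟩)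
    ⟨?_, ?_⟩⟩
  · simpa [Finset.sum_val] using D.2.2
  · intro D D' h
    exact Subtype.ext (Finset.val_inj.1 (congrArg (fun p => p.1.parts) h))
  · rintro ⟨p, hp⟩
    refine ⟨⟨⟨p.parts, hp⟩, fun a ha => p.parts_pos ha, ?_⟩, rfl⟩
    simpa [Finset.sum_val] using p.parts_sum

theorem s_eq_ncard (k n : ℕ) (hk : 1 ≤ k) : s k n = (smallestPairs k n).ncard :=
  (Nat.card_congr (nonempty_equiv_smallestPairs k n hk).some).symm

theorem q_eq_ncard (n : ℕ) : q n = (distinctSets n).ncard :=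
  (Nat.card_congr (nonempty_equiv_distinctSets n).some).symm

theorem finite_smallestPairs (k n : ℕ) (hk : 1 ≤ k) : (smallestPairs k n).Finite :=
  Finite.of_equiv _ (nonempty_equiv_smallestPairs k n hk).some.symm

theorem finite_distinctSets (n : ℕ) : (distinctSets n).Finite :=
  Finite.of_equiv _ (nonempty_equiv_distinctSets n).some.symm

/-- Multiplication by `1 + x^m`: a pair in `weakPairs j n` either has `m ∈ D`, and moving that copy
of `m` out of `D` gives a pair for `j + 1`, or has `m ∉ D`. -/
theorem ncard_weakPairs_eq_add (j n : ℕ) (hj : 1 ≤ j) :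
    (weakPairs j n).ncard = (smallestPairs (j + 1) n).ncard + (smallestPairs j n).ncard := by
  have hinj : Set.InjOn (fun x : ℕ × Finset ℕ => (x.1, insert x.1 x.2))
      (smallestPairs (j + 1) n) := by
    rintro ⟨m, D⟩ ⟨-, h2, -⟩ ⟨m', D'⟩ ⟨-, h2', -⟩ h
    obtain ⟨rfl, h⟩ := Prod.mk.inj h
    have hD : m ∉ D := fun h => lt_irrefl _ (h2 m h)
    have hD' : m ∉ D' := fun h => lt_irrefl _ (h2' m h)
    have := congrArg (fun E => Finset.erase E m) h
    simp only [Finset.erase_insert hD, Finset.erase_insert hD'] at this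
    rw [this]
  rw [← hinj.ncard_image, ← Set.ncard_union_eq _
    ((finite_smallestPairs _ _ (by omega)).image _) (finite_smallestPairs _ _ hj)]
  · congr 1
    ext ⟨m, D⟩
    constructor
    · rintro ⟨h1, h2, h3⟩
      dsimp only at h1 h2 h3
      by_cases hm : m ∈ D
      · refine Or.inl ⟨(m, D.erase m), ⟨h1, ?_, ?_⟩, ?_⟩
        · intro a ha
          have ha := Finset.mem_erase.1 ha
          exact lt_of_le_of_ne (h2 a ha.2) ha.1.symm
        · have := Finset.add_sum_erase D (fun a => a) hm
          dsimp only at this ⊢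
          rw [add_one_mul]
          omega
        · simp [Finset.insert_erase hm]
      · refine Or.inr ⟨h1, fun a ha => lt_of_le_of_ne (h2 a ha) ?_, h3⟩
        rintro rfl
        exact hm ha
    · rintro (⟨⟨m', D'⟩, ⟨h1, h2, h3⟩, h⟩ | ⟨h1, h2, h3⟩)
      · obtain ⟨rfl, rfl⟩ := Prod.mk.inj h
        dsimp only at h1 h2 h3
        have hD : m' ∉ D' := fun h => lt_irrefl _ (h2 m' h)
        refine ⟨h1, ?_, ?_⟩
        · intro a ha
          rcases Finset.mem_insert.1 ha with rfl | ha
          · exact le_rfl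
          · exact (h2 a ha).le
        · dsimp only
          rw [Finset.sum_insert hD]
          rw [add_one_mul] at h3
          omega
      · exact ⟨h1, fun a ha => (h2 a ha).le, h3⟩
  · rw [Set.disjoint_left]
    rintro _ ⟨⟨m, D⟩, -, rfl⟩ ⟨-, h2, -⟩
    exact lt_irrefl _ (h2 m (Finset.mem_insert_self _ _))

/-- The shift `m ↦ m + 1`; the pairs with `m = 0` before the shift are the partitions into distinct
parts. -/
theorem ncard_weakPairs_shift (j N : ℕ) (hj : 1 ≤ j) :
    (weakPairs j (N + j)).ncard = (smallestPairs j N).ncard + (distinctSets N).ncard := by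
  have hinj : Function.Injective (fun x : ℕ × Finset ℕ => (x.1 + 1, x.2)) := by
    rintro ⟨m, D⟩ ⟨m', D'⟩ h
    simpa using h
  have hinj' : Function.Injective (fun D : Finset ℕ => ((0 : ℕ), D)) := by
    intro D D' h
    simpa using h
  rw [← Set.ncard_image_of_injective (distinctSets N) hinj', ← Set.ncard_union_eq _
    (finite_smallestPairs _ _ hj) ((finite_distinctSets _).image _),
    ← Set.ncard_image_of_injective (smallestPairs j N ∪ _) hinj]
  · congr 1
    ext ⟨m, D⟩
    constructor
    · rintro ⟨h1, h2, h3⟩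
      dsimp only at h1 h2 h3
      obtain ⟨m, rfl⟩ : ∃ i, m = i + 1 := ⟨m - 1, by omega⟩
      rw [mul_add_one] at h3
      refine ⟨(m, D), ?_, rfl⟩
      rcases Nat.eq_zero_or_pos m with rfl | hm
      · exact Or.inr ⟨D, ⟨fun a ha => h2 a ha, by omega⟩, rfl⟩
      · exact Or.inl ⟨hm, fun a ha => h2 a ha, by dsimp only; omega⟩
    · rintro ⟨_, (⟨h1, h2, h3⟩ | ⟨D', ⟨h2, h3⟩, rfl⟩), h⟩
      · obtain ⟨rfl, rfl⟩ := Prod.mk.inj h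
        refine ⟨by simp, fun a ha => h2 a ha, ?_⟩
        dsimp only
        rw [mul_add_one]
        omega
      · obtain ⟨rfl, rfl⟩ := Prod.mk.inj h
        refine ⟨by simp, fun a ha => h2 a ha, ?_⟩
        dsimp only
        omega
  · rw [Set.disjoint_left]
    rintro _ ⟨h1, -, -⟩ ⟨D, -, rfl⟩
    exact absurd h1 (by simp)

theorem s_recurrence (k n : ℕ) (hk : 2 ≤ k) (hn : k ≤ n) :
    s k n + s (k - 1) n = s (k - 1) (n - k + 1) + q (n - k + 1) := by
  obtain ⟨j, rfl⟩ : ∃ j, k = j + 1 := ⟨k - 1, by omega⟩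
  have hj : 1 ≤ j := by omega
  obtain ⟨N, rfl⟩ : ∃ N, n = N + j := ⟨n - j, by omega⟩
  have hN : N + j - (j + 1) + 1 = N := by omega
  rw [hN, Nat.add_sub_cancel, s_eq_ncard _ _ (by omega), s_eq_ncard _ _ hj, s_eq_ncard _ _ hj,
    q_eq_ncard, ← ncard_weakPairs_eq_add j _ hj, ncard_weakPairs_shift j N hj]
end

section
/- For all integers k ≥ 2 and n ≥ k, the set of partitions of n whose smallest part occurs exactly k or exactly k−1 times (with all other parts distinct) and whose smallest part is greater than 1 is in bijection with the set S_{k-1}(n-k+1) of partitions of n−k+1 whose smallest part occurs exactly k−1 times and whose other parts are distinct (the bijection decreases the k−1 smallest parts by one). -/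
open Multiset

/-- Pairs `(m, t)` where `m ≥ 1` and `t` is a set of distinct parts, encoded as a multiset without
repetition, all larger than `m`, with `j * (m + 1) + ∑ t = n`. -/
abbrev SmallestData (j n : ℕ) : Type :=
  {x : ℕ × Multiset ℕ //
    x.2.Nodup ∧ (∀ a ∈ x.2, x.1 < a) ∧ 0 < x.1 ∧ j * (x.1 + 1) + x.2.sum = n}

/-- A multiset with minimum `m` determines `m`, and then the rest after removing `j` copies. -/
lemma replicate_add_inj {j m m' : ℕ} {t t' : Multiset ℕ} (hj : 0 < j)
    (ht : ∀ a ∈ t, m ≤ a) (ht' : ∀ a ∈ t', m' ≤ a)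
    (h : replicate j m + t = replicate j m' + t') : m = m' ∧ t = t' := by
  have h1 : m ∈ replicate j m' + t' := by
    rw [← h]; simp [mem_replicate, hj.ne']
  have h2 : m' ∈ replicate j m + t := by
    rw [h]; simp [mem_replicate, hj.ne']
  have hm : m = m' := by
    apply le_antisymm
    · rcases mem_add.1 h2 with h2 | h2
      · exact (eq_of_mem_replicate h2).ge
      · exact ht _ h2
    · rcases mem_add.1 h1 with h1 | h1
      · exact (eq_of_mem_replicate h1).ge
      · exact ht' _ h1
  subst hm
  exact ⟨rfl, add_left_cancel h⟩

lemma isSmallestRep_iff {j n : ℕ} (hj : 0 < j) (p : n.Partition) :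
    IsSmallestRep j p ↔
      ∃ m t, p.parts = replicate j m + t ∧ t.Nodup ∧ ∀ a ∈ t, m < a := by
  constructor
  · rintro ⟨m, -, hle, hc, hu⟩
    have hp : p.parts = replicate j m + p.parts.filter (fun a => ¬ a = m) := by
      rw [← hc, ← filter_eq', filter_add_not]
    refine ⟨m, _, hp, ?_, ?_⟩
    · rw [nodup_iff_count_le_one]
      intro a
      by_cases ha : a ∈ p.parts.filter (fun a => ¬ a = m)
      · rw [mem_filter] at ha
        exact (count_le_of_le a (filter_le _ _)).trans (hu a ha.1 ha.2).le
      · simp [count_eq_zero_of_notMem ha]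
    · intro a ha
      rw [mem_filter] at ha
      exact lt_of_le_of_ne (hle a ha.1) (Ne.symm ha.2)
  · rintro ⟨m, t, hp, hnd, hlt⟩
    have hmt : m ∉ t := fun h => (hlt m h).false
    refine ⟨m, ?_, ?_, ?_, ?_⟩
    · rw [hp]; simp [mem_replicate, hj.ne']
    · intro a ha
      rw [hp, mem_add] at ha
      rcases ha with ha | ha
      · exact (eq_of_mem_replicate ha).ge
      · exact (hlt a ha).le
    · rw [hp]; simp [count_eq_zero_of_notMem hmt]
    · intro a ha ham
      rw [hp, mem_add] at ha
      have hat : a ∈ t := ha.resolve_left fun h => ham (eq_of_mem_replicate h)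
      rw [hp, count_add, count_replicate, if_neg (Ne.symm ham), count_eq_one_of_mem hnd hat]

/-- The two cases "`j + 1` copies" and "`j` copies" of the smallest part `m + 1` merge into one
description, according to whether `m + 1` lies in the remaining set `t`. -/
lemma left_iff {j n : ℕ} (hj : 0 < j) (p : n.Partition) :
    ((IsSmallestRep (j + 1) p ∨ IsSmallestRep j p) ∧ ∀ a ∈ p.parts, 1 < a) ↔
      ∃ m t, p.parts = replicate j (m + 1) + t ∧ t.Nodup ∧ (∀ a ∈ t, m < a) ∧ 0 < m := by
  rw [isSmallestRep_iff hj, isSmallestRep_iff j.succ_pos]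
  constructor
  · rintro ⟨⟨m, t, hp, hnd, hlt⟩ | ⟨m, t, hp, hnd, hlt⟩, h1⟩
    · have hm : 1 < m := h1 m (by rw [hp]; simp [mem_replicate])
      obtain ⟨m, rfl⟩ : ∃ r, m = r + 1 := ⟨m - 1, by omega⟩
      refine ⟨m, (m + 1) ::ₘ t, ?_, ?_, ?_, by omega⟩
      · rw [hp, replicate_succ, cons_add, add_cons]
      · exact nodup_cons.2 ⟨fun h => (hlt _ h).false, hnd⟩
      · intro a ha
        rcases mem_cons.1 ha with rfl | ha
        · omega
        · have := hlt a ha; omega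
    · have hm : 1 < m := h1 m (by rw [hp]; simp [mem_replicate, hj.ne'])
      obtain ⟨m, rfl⟩ : ∃ r, m = r + 1 := ⟨m - 1, by omega⟩
      exact ⟨m, t, hp, hnd, fun a ha => by have := hlt a ha; omega, by omega⟩
  · rintro ⟨m, t, hp, hnd, hlt, hm⟩
    refine ⟨?_, ?_⟩
    · by_cases hmt : m + 1 ∈ t
      · left
        obtain ⟨u, rfl⟩ := exists_cons_of_mem hmt
        rw [nodup_cons] at hnd
        refine ⟨m + 1, u, ?_, hnd.2, ?_⟩
        · rw [hp, replicate_succ, cons_add, add_cons]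
        · intro a ha
          have h1 := hlt a (mem_cons_of_mem ha)
          have h2 : a ≠ m + 1 := fun h => hnd.1 (h ▸ ha)
          omega
      · right
        refine ⟨m + 1, t, hp, hnd, ?_⟩
        intro a ha
        have h1 := hlt a ha
        have h2 : a ≠ m + 1 := fun h => hmt (h ▸ ha)
        omega
    · intro a ha
      rw [hp, mem_add] at ha
      rcases ha with ha | ha
      · have := eq_of_mem_replicate ha; omega
      · have := hlt a ha; omega

/-- The partition with `j` copies of `m + 1` and the parts `t`. -/
def leftPartition {j n : ℕ} (x : SmallestData j n) : n.Partition where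
  parts := replicate j (x.1.1 + 1) + x.1.2
  parts_pos := by
    intro a ha
    rcases mem_add.1 ha with ha | ha
    · have := eq_of_mem_replicate ha; omega
    · have := x.2.2.1 a ha; omega
  parts_sum := by
    rw [sum_add, sum_replicate, smul_eq_mul, x.2.2.2.2]

/-- The partition with `j` copies of `m` and the parts `t`; its size is smaller by `j`. -/
def rightPartition {j n r : ℕ} (hr : r + j = n) (x : SmallestData j n) : r.Partition where
  parts := replicate j x.1.1 + x.1.2
  parts_pos := by
    intro a ha
    rcases mem_add.1 ha with ha | ha
    · have := eq_of_mem_replicate ha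
      have := x.2.2.2.1
      omega
    · have := x.2.2.1 a ha; omega
  parts_sum := by
    have h := x.2.2.2.2
    rw [mul_add] at h
    rw [sum_add, sum_replicate, smul_eq_mul]
    omega

lemma left_bijective {j n : ℕ} (hj : 0 < j) :
    Function.Bijective (fun x : SmallestData j n =>
      (⟨leftPartition x, (left_iff hj _).2
        ⟨x.1.1, x.1.2, rfl, x.2.1, x.2.2.1, x.2.2.2.1⟩⟩ :
        {p : n.Partition //
          (IsSmallestRep (j + 1) p ∨ IsSmallestRep j p) ∧ ∀ a ∈ p.parts, 1 < a})) := by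
  constructor
  · intro x y hxy
    have h : replicate j (x.1.1 + 1) + x.1.2 = replicate j (y.1.1 + 1) + y.1.2 :=
      congrArg (fun z => z.1.parts) hxy
    obtain ⟨h1, h2⟩ := replicate_add_inj hj (fun a ha => x.2.2.1 a ha)
      (fun a ha => y.2.2.1 a ha) h
    exact Subtype.ext (Prod.ext (Nat.succ_injective h1) h2)
  · rintro ⟨p, hp⟩
    obtain ⟨m, t, hpt, hnd, hlt, hm⟩ := (left_iff hj p).1 hp
    refine ⟨⟨(m, t), hnd, hlt, hm, ?_⟩, Subtype.ext (Nat.Partition.ext hpt.symm)⟩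
    have := p.parts_sum
    rwa [hpt, sum_add, sum_replicate, smul_eq_mul] at this

lemma right_bijective {j n r : ℕ} (hj : 0 < j) (hr : r + j = n) :
    Function.Bijective (fun x : SmallestData j n =>
      (⟨rightPartition hr x, (isSmallestRep_iff hj _).2
        ⟨x.1.1, x.1.2, rfl, x.2.1, x.2.2.1⟩⟩ :
        {p : r.Partition // IsSmallestRep j p})) := by
  constructor
  · intro x y hxy
    have h : replicate j x.1.1 + x.1.2 = replicate j y.1.1 + y.1.2 :=
      congrArg (fun z => z.1.parts) hxy
    obtain ⟨h1, h2⟩ := replicate_add_inj hj (fun a ha => (x.2.2.1 a ha).le)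
      (fun a ha => (y.2.2.1 a ha).le) h
    exact Subtype.ext (Prod.ext h1 h2)
  · rintro ⟨p, hp⟩
    obtain ⟨m, t, hpt, hnd, hlt⟩ := (isSmallestRep_iff hj p).1 hp
    have hm : 0 < m := p.parts_pos (by rw [hpt]; simp [mem_replicate, hj.ne'])
    refine ⟨⟨(m, t), hnd, hlt, hm, ?_⟩, Subtype.ext (Nat.Partition.ext hpt.symm)⟩
    have := p.parts_sum
    rw [hpt, sum_add, sum_replicate, smul_eq_mul] at this
    change j * (m + 1) + t.sum = n
    rw [mul_add]
    omega

theorem smallest_gt_one_bijection_general (k n : ℕ) (hk : 2 ≤ k) (hn : k ≤ n) :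
    Nonempty
      ({p : n.Partition //
          (IsSmallestRep k p ∨ IsSmallestRep (k - 1) p) ∧ ∀ a ∈ p.parts, 1 < a} ≃
        {p : (n - k + 1).Partition // IsSmallestRep (k - 1) p}) := by
  obtain ⟨j, rfl⟩ : ∃ j, k = j + 1 := ⟨k - 1, by omega⟩
  have hj : 0 < j := by omega
  rw [Nat.add_sub_cancel]
  exact ⟨(Equiv.ofBijective _ (left_bijective hj)).symm.trans
    (Equiv.ofBijective _ (right_bijective hj (by omega)))⟩
end

section
/- For every integer n ≥ 1, the number of partitions of n in which the largest part occurs exactly three times and all other parts are distinct satisfies ℓ_3(n) + q(n+2) + q(n+1) = q(n+3) + q(n); equivalently, ℓ_3(n) = q(n+3) − q(n+2) − q(n+1) + q(n). In particular, q(n+1) + q(n+2) ≤ q(n) + q(n+3). -/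
/-- Pairs `(m, S)` encoding the partition of `n` with largest part `m`, repeated `r` times, and with
`S` as its set of remaining (distinct) parts. -/
def LargestRepData (r n : ℕ) : Type :=
  {x : ℕ × Finset ℕ // 0 < x.1 ∧ (∀ a ∈ x.2, 0 < a ∧ a < x.1) ∧ r * x.1 + ∑ a ∈ x.2, a = n}

/-- The partition encoded by an element of `LargestRepData r n`. -/
def LargestRepData.toPartition {r n : ℕ} (x : LargestRepData r n) : n.Partition where
  parts := Multiset.replicate r x.1.1 + x.1.2.val
  parts_pos := by
    intro i hi
    rcases Multiset.mem_add.1 hi with h | h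
    · exact (Multiset.eq_of_mem_replicate h) ▸ x.2.1
    · exact (x.2.2.1 i h).1
  parts_sum := by
    have h := x.2.2.2
    rw [Finset.sum_eq_multiset_sum, Multiset.map_id'] at h
    simpa using h

theorem LargestRepData.mem_le {r n : ℕ} (x : LargestRepData r n) {a : ℕ}
    (ha : a ∈ x.toPartition.parts) : a ≤ x.1.1 := by
  rcases Multiset.mem_add.1 ha with h | h
  · exact (Multiset.eq_of_mem_replicate h).le
  · exact (x.2.2.1 a h).2.le

theorem LargestRepData.top_mem {r n : ℕ} (hr : 0 < r) (x : LargestRepData r n) :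
    x.1.1 ∈ x.toPartition.parts :=
  Multiset.mem_add.2 (Or.inl (Multiset.mem_replicate.2 ⟨hr.ne', rfl⟩))

theorem LargestRepData.isLargestRep {r n : ℕ} (hr : 0 < r) (x : LargestRepData r n) :
    IsLargestRep r x.toPartition := by
  refine ⟨x.1.1, x.top_mem hr, fun a ha => x.mem_le ha, ?_, ?_⟩
  · have : x.1.1 ∉ x.1.2.val := fun h => lt_irrefl _ (x.2.2.1 _ h).2
    simp [LargestRepData.toPartition, Multiset.count_eq_zero_of_notMem this]
  · intro a ha hne
    have hS : a ∈ x.1.2.val := by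
      rcases Multiset.mem_add.1 ha with h | h
      · exact absurd (Multiset.eq_of_mem_replicate h) hne
      · exact h
    simp [LargestRepData.toPartition, Multiset.count_replicate, hne.symm,
      Multiset.count_eq_one_of_mem x.1.2.nodup hS]

theorem LargestRepData.bijective {r n : ℕ} (hr : 0 < r) :
    Function.Bijective (fun x : LargestRepData r n =>
      (⟨x.toPartition, x.isLargestRep hr⟩ : {p : n.Partition // IsLargestRep r p})) := by
  constructor
  · intro x y hxy
    have hp : x.toPartition = y.toPartition := congrArg Subtype.val hxy
    have h1 : x.1.1 = y.1.1 :=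
      le_antisymm (y.mem_le (hp ▸ x.top_mem hr)) (x.mem_le (hp ▸ y.top_mem hr))
    have h2 : Multiset.replicate r x.1.1 + x.1.2.val = Multiset.replicate r y.1.1 + y.1.2.val :=
      congrArg Nat.Partition.parts hp
    rw [h1] at h2
    exact Subtype.ext (Prod.ext h1 (Finset.val_injective (add_left_cancel h2)))
  · rintro ⟨p, m, hm, hmax, hcount, hone⟩
    have key : Multiset.replicate r m + (p.parts.toFinset.erase m).val = p.parts := by
      ext a
      have hmem : a ∈ (p.parts.toFinset.erase m).val ↔ a ≠ m ∧ a ∈ p.parts := by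
        rw [Finset.mem_val, Finset.mem_erase, Multiset.mem_toFinset]
      rw [Multiset.count_add, Multiset.count_replicate,
        Multiset.count_eq_of_nodup (Finset.nodup _), if_congr hmem rfl rfl]
      by_cases h : a = m
      · subst h
        simp [hcount]
      · by_cases ha : a ∈ p.parts
        · simp [h, Ne.symm h, ha, hone a ha h]
        · simp [Ne.symm h, ha]
    refine ⟨⟨(m, p.parts.toFinset.erase m), p.parts_pos hm, ?_, ?_⟩, ?_⟩
    · intro a ha
      rw [Finset.mem_erase, Multiset.mem_toFinset] at ha
      exact ⟨p.parts_pos ha.2, lt_of_le_of_ne (hmax a ha.2) ha.1⟩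
    · have h := congrArg Multiset.sum key
      rw [p.parts_sum, Multiset.sum_add, Multiset.sum_replicate, smul_eq_mul] at h
      rw [Finset.sum_eq_multiset_sum, Multiset.map_id']
      exact h
    · exact Subtype.ext (Nat.Partition.ext key)

theorem l_eq_card {r : ℕ} (hr : 0 < r) (n : ℕ) : l r n = Nat.card (LargestRepData r n) :=
  (Nat.card_eq_of_bijective _ (LargestRepData.bijective hr)).symm

theorem LargestRepData.finite {r : ℕ} (hr : 0 < r) (n : ℕ) : Finite (LargestRepData r n) :=
  Finite.of_injective _ (LargestRepData.bijective hr).1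

/-- Raise `r` copies of the largest part by one. Starting from `r + 1` copies of `m`, the copy that
is left over joins the set of smaller parts. -/
def LargestRepData.raise {r n : ℕ} :
    LargestRepData r n ⊕ LargestRepData (r + 1) n → LargestRepData r (n + r)
  | .inl x => ⟨(x.1.1 + 1, x.1.2), Nat.succ_pos _,
      fun a ha => ⟨(x.2.2.1 a ha).1, (x.2.2.1 a ha).2.trans (Nat.lt_succ_self _)⟩, by
        have := x.2.2.2
        simp only
        linarith⟩
  | .inr x => ⟨(x.1.1 + 1, insert x.1.1 x.1.2), Nat.succ_pos _, by
      intro a ha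
      rcases Finset.mem_insert.1 ha with rfl | h
      · exact ⟨x.2.1, Nat.lt_succ_self _⟩
      · exact ⟨(x.2.2.1 a h).1, (x.2.2.1 a h).2.trans (Nat.lt_succ_self _)⟩, by
        have := x.2.2.2
        have hn : x.1.1 ∉ x.1.2 := fun h => lt_irrefl _ (x.2.2.1 _ h).2
        simp only [Finset.sum_insert hn]
        linarith⟩

theorem LargestRepData.raise_bijective {r n : ℕ} (hn : 1 ≤ n) :
    Function.Bijective (LargestRepData.raise (r := r) (n := n)) := by
  have top_notMem : ∀ {t k : ℕ} (x : LargestRepData t k), x.1.1 ∉ x.1.2 :=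
    fun x h => lt_irrefl _ (x.2.2.1 _ h).2
  constructor
  · rintro (x | x) (y | y) h
    all_goals
      have h1 : x.1.1 + 1 = y.1.1 + 1 := congrArg (fun z => z.1.1) h
      replace h1 := Nat.succ_injective h1
      have h2 := congrArg (fun z => z.1.2) h
      simp only [LargestRepData.raise] at h2
    · exact congrArg Sum.inl (Subtype.ext (Prod.ext h1 h2))
    · exact absurd (h1 ▸ h2 ▸ Finset.mem_insert_self _ _) (top_notMem x)
    · exact absurd (h1 ▸ h2 ▸ Finset.mem_insert_self _ _) (top_notMem y)
    · have h3 : x.1.2 = y.1.2 := by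
        rw [← Finset.erase_insert (top_notMem x), ← Finset.erase_insert (top_notMem y), h2, h1]
      exact congrArg Sum.inr (Subtype.ext (Prod.ext h1 h3))
  · rintro ⟨⟨m, S⟩, hm, hS, hsum⟩
    simp only at hm hS hsum
    obtain ⟨k, rfl⟩ : ∃ k, m = k + 1 := ⟨m - 1, by omega⟩
    have hk : 0 < k := by
      rcases Nat.eq_zero_or_pos k with rfl | h
      · -- if the largest part is `1`, no other parts remain and the sum is `r`, not `n + r`
        have : S = ∅ := Finset.eq_empty_of_forall_notMem fun a ha => by
          have := hS a ha
          omega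
        subst this
        simp at hsum
        omega
      · exact h
    by_cases hmem : k ∈ S
    · refine ⟨.inr ⟨(k, S.erase k), hk, ?_, ?_⟩, ?_⟩
      · intro a ha
        rw [Finset.mem_erase] at ha
        have := hS a ha.2
        exact ⟨this.1, by have := ha.1; simp only; omega⟩
      · have := Finset.add_sum_erase S (fun a => a) hmem
        simp only at this ⊢
        linarith
      · exact Subtype.ext (Prod.ext rfl (Finset.insert_erase hmem))
    · refine ⟨.inl ⟨(k, S), hk, ?_, ?_⟩, rfl⟩
      · intro a ha
        have h := hS a ha
        have : a ≠ k := fun hak => hmem (hak ▸ ha)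
        exact ⟨h.1, by simp only; omega⟩
      · simp only
        linarith

theorem l_recurrence {r n : ℕ} (hr : 0 < r) (hn : 1 ≤ n) :
    l r (n + r) = l r n + l (r + 1) n := by
  have := LargestRepData.finite hr n
  have := LargestRepData.finite (Nat.succ_pos r) n
  rw [l_eq_card hr, l_eq_card hr, l_eq_card (Nat.succ_pos r),
    ← Nat.card_eq_of_bijective _ (LargestRepData.raise_bijective hn), Nat.card_sum]

theorem q_eq_l_one {n : ℕ} (hn : 1 ≤ n) : q n = l 1 n := by
  refine Nat.card_congr (Equiv.subtypeEquivRight fun p => ?_)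
  constructor
  · intro h
    have hne : p.parts.toFinset.Nonempty := by
      rw [Finset.nonempty_iff_ne_empty, Ne, Multiset.toFinset_eq_empty]
      intro h0
      have := p.parts_sum
      rw [h0, Multiset.sum_zero] at this
      omega
    have hm := Multiset.mem_toFinset.1 (Finset.max'_mem _ hne)
    exact ⟨_, hm, fun a ha => Finset.le_max' _ _ (Multiset.mem_toFinset.2 ha),
      Multiset.count_eq_one_of_mem h hm, fun a ha _ => Multiset.count_eq_one_of_mem h ha⟩
  · rintro ⟨m, -, -, hcount, hone⟩
    rw [Multiset.nodup_iff_count_le_one]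
    intro a
    by_cases ha : a ∈ p.parts
    · by_cases h : a = m
      · exact (h ▸ hcount).le
      · exact (hone a ha h).le
    · simp [Multiset.count_eq_zero_of_notMem ha]

theorem l3_eq (n : ℕ) (hn : 1 ≤ n) :
    l 3 n + q (n + 2) + q (n + 1) = q (n + 3) + q n ∧
      q (n + 1) + q (n + 2) ≤ q n + q (n + 3) := by
  have h1 : l 1 (n + 1) = l 1 n + l 2 n := l_recurrence one_pos hn
  have h2 : l 1 (n + 3) = l 1 (n + 2) + l 2 (n + 2) :=
    l_recurrence (n := n + 2) one_pos (by omega)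
  have h3 : l 2 (n + 2) = l 2 n + l 3 n := l_recurrence two_pos hn
  rw [q_eq_l_one hn, q_eq_l_one (n := n + 1) (by omega), q_eq_l_one (n := n + 2) (by omega),
    q_eq_l_one (n := n + 3) (by omega)]
  omega
end
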